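/- arXiv:1107.1016 — 2 statements merged into one kernel-verified Lean document; each statement's English description precedes it below -/
import Mathlib

section
/- Let S ⊂ ℝⁿ be a well-centered convex body with inner John ellipsoid E, coordinates along the principal axes of E with semi-axis lengths a¹,…,aⁿ > 0, and R_n = {x ∈ ℝⁿ : |xⁱ| ≤ n aⁱ}. Let 0 ≤ s ≤ 1, let p ∈ ∂S, y = (1−s)p, and let P be a hyperplane supporting S at p. If diam(P^⊥ ∩ R_n) ≥ 2 s^(1/2) dist(0, P), then dist(y, P) ≤ (n^(3/2)/2) · s^(1/2) · diam(P^⊥ ∩ S). -/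
open Metric Set
open scoped RealInnerProductSpace Pointwise

/-!
Let `d` be the distance from `0` to `P`. The homothety with center `p ∈ P` and ratio `s` preserves
`P` and sends `0` to `y`, so `dist(y, P) = s * d`, and the hypothesis bounds this by
`s ^ (1/2) * diam (P^⊥ ∩ R_n) / 2`. Since `∑ (xⁱ/aⁱ)² ≤ n * n²` on the box `R_n`, it is contained in
`n ^ (3/2) • E ⊆ n ^ (3/2) • S`, and since `P^⊥` is invariant under scaling,
`diam (P^⊥ ∩ R_n) ≤ n ^ (3/2) * diam (P^⊥ ∩ S)`.
-/

lemma smul_coe_submodule_eq_self {K M : Type*} [DivisionRing K] [AddCommGroup M] [Module K M]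
    (L : Submodule K M) {k : K} (hk : k ≠ 0) : k • (L : Set M) = L := by
  ext x
  rw [mem_smul_set_iff_inv_smul_mem₀ hk, SetLike.mem_coe, L.smul_mem_iff (inv_ne_zero hk),
    SetLike.mem_coe]

section Scaling

variable {𝕜 V P : Type*} [NormedField 𝕜] [SeminormedAddCommGroup V] [NormedSpace 𝕜 V]
  [PseudoMetricSpace P] [NormedAddTorsor V P]

lemma infDist_smul_submodule (L : Submodule 𝕜 V) (s : 𝕜) (x : V) :
    infDist (s • x) L = ‖s‖ * infDist x L := by
  obtain rfl | hs := eq_or_ne s 0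
  · rw [zero_smul, norm_zero, zero_mul, infDist_zero_of_mem L.zero_mem]
  · simpa only [smul_coe_submodule_eq_self L hs] using infDist_smul₀ hs (L : Set V) x

lemma infDist_affineSubspace_eq_infDist_direction (Q : AffineSubspace 𝕜 P) {p : P} (hp : p ∈ Q)
    (x : P) : infDist x Q = infDist (x -ᵥ p) Q.direction := by
  rw [Q.coe_direction_eq_vsub_set_right hp]
  exact (infDist_image (IsometryEquiv.vaddConst p).symm.isometry).symm

lemma infDist_homothety (Q : AffineSubspace 𝕜 P) {p : P} (hp : p ∈ Q) (s : 𝕜) (x : P) :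
    infDist (AffineMap.homothety p s x) Q = ‖s‖ * infDist x Q := by
  rw [infDist_affineSubspace_eq_infDist_direction Q hp, AffineMap.homothety_apply, vadd_vsub,
    infDist_smul_submodule, ← infDist_affineSubspace_eq_infDist_direction Q hp]

lemma diam_submodule_inter_le_of_subset_smul (L : Submodule 𝕜 V) {A B : Set V} {k : 𝕜}
    (hB : Bornology.IsBounded B) (hAB : A ⊆ k • B) :
    diam ((L : Set V) ∩ A) ≤ ‖k‖ * diam ((L : Set V) ∩ B) := by
  obtain rfl | hk := eq_or_ne k 0
  · have hA : A.Subsingleton := (subsingleton_zero_smul_set B).anti hAB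
    simp only [diam_subsingleton (hA.anti inter_subset_right), norm_zero, zero_mul, le_refl]
  · have hsub : (L : Set V) ∩ A ⊆ k • ((L : Set V) ∩ B) := by
      rw [smul_set_inter₀ hk, smul_coe_submodule_eq_self L hk]
      exact inter_subset_inter_right _ hAB
    calc diam ((L : Set V) ∩ A) ≤ diam (k • ((L : Set V) ∩ B)) :=
          diam_mono hsub ((hB.subset inter_subset_right).smul₀ k)
      _ = ‖k‖ * diam ((L : Set V) ∩ B) := diam_smul₀ k _

end Scaling

lemma coe_mk'_orthogonal_span_singleton {𝕜 F : Type*} [RCLike 𝕜] [NormedAddCommGroup F]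
    [InnerProductSpace 𝕜 F] (p v : F) :
    (AffineSubspace.mk' p (Submodule.span 𝕜 {v})ᗮ : Set F) = {x | inner 𝕜 x v = inner 𝕜 p v} := by
  ext x
  rw [SetLike.mem_coe, AffineSubspace.mem_mk', vsub_eq_sub,
    Submodule.mem_orthogonal_singleton_iff_inner_left, inner_sub_left, sub_eq_zero, mem_ofPred_eq]

section Ellipsoid

variable {ι : Type*}

/-- The box centered at the origin with sides parallel to the coordinate axes and half-side
lengths `b i`. The box `R_n` is `axisBox fun i ↦ n * a i`. -/
def axisBox (b : ι → ℝ) : Set (EuclideanSpace ℝ ι) := {x | ∀ i, |x i| ≤ b i}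

variable [Fintype ι]

/-- The ellipsoid centered at the origin whose principal axes are the coordinate axes, with
semi-axis lengths `a i`. A semi-axis `a i = 0` gives a cylinder instead of a degenerate ellipsoid,
as `x i / 0 = 0`. -/
def axisEllipsoid (a : ι → ℝ) : Set (EuclideanSpace ℝ ι) := {x | ∑ i, (x i / a i) ^ 2 ≤ 1}

variable {a : ι → ℝ}

lemma mem_smul_axisEllipsoid_iff (ha : ∀ i, a i ≠ 0) (k : ℝ) (x : EuclideanSpace ℝ ι) :
    x ∈ k • axisEllipsoid a ↔ ∑ i, (x i / a i) ^ 2 ≤ k ^ 2 := by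
  obtain rfl | hk := eq_or_ne k 0
  · have h0 : (0 : EuclideanSpace ℝ ι) ∈ axisEllipsoid a := by simp [axisEllipsoid]
    have hsum : ∑ i, (x i / a i) ^ 2 ≤ 0 ↔ x = 0 := by
      rw [(Finset.sum_nonneg fun i _ ↦ sq_nonneg (x i / a i)).ge_iff_eq',
        Finset.sum_eq_zero_iff_of_nonneg fun i _ ↦ sq_nonneg (x i / a i)]
      simp [PiLp.ext_iff, ha]
    rw [zero_smul_set ⟨0, h0⟩, mem_zero, zero_pow two_ne_zero, hsum]
  · have hsum : ∑ i, ((k⁻¹ • x) i / a i) ^ 2 = (∑ i, (x i / a i) ^ 2) / k ^ 2 := by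
      rw [Finset.sum_div]
      refine Finset.sum_congr rfl fun i _ ↦ ?_
      rw [PiLp.smul_apply, smul_eq_mul, mul_div_assoc, mul_pow, inv_pow, inv_mul_eq_div]
    rw [mem_smul_set_iff_inv_smul_mem₀ hk, axisEllipsoid, mem_ofPred_eq, hsum,
      div_le_one (by positivity)]

lemma axisBox_subset_smul_axisEllipsoid (ha : ∀ i, 0 < a i) (r : ℝ) :
    axisBox (fun i ↦ r * a i) ⊆ (√(Fintype.card ι) * r) • axisEllipsoid a := by
  intro x hx
  have hterm (i : ι) : (x i / a i) ^ 2 ≤ r ^ 2 := by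
    have hi : |x i / a i| ≤ r := by
      rw [abs_div, abs_of_pos (ha i), div_le_iff₀ (ha i)]
      exact hx i
    exact sq_le_sq.2 (hi.trans (le_abs_self r))
  rw [mem_smul_axisEllipsoid_iff fun i ↦ (ha i).ne']
  calc ∑ i, (x i / a i) ^ 2 ≤ ∑ _i : ι, r ^ 2 := Finset.sum_le_sum fun i _ ↦ hterm i
    _ = (√(Fintype.card ι) * r) ^ 2 := by
      rw [Finset.sum_const, Finset.card_univ, nsmul_eq_mul, mul_pow,
        Real.sq_sqrt (Nat.cast_nonneg _)]

lemma axisBox_card_subset_smul_axisEllipsoid (ha : ∀ i, 0 < a i) :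
    axisBox (fun i ↦ Fintype.card ι * a i) ⊆
      (Fintype.card ι : ℝ) ^ ((3 : ℝ) / 2) • axisEllipsoid a := by
  have hpow : (Fintype.card ι : ℝ) ^ ((3 : ℝ) / 2) = √(Fintype.card ι) * Fintype.card ι := by
    rw [Real.sqrt_eq_rpow, ← Real.rpow_add_one' (Nat.cast_nonneg _) (by norm_num)]
    norm_num
  rw [hpow]
  exact axisBox_subset_smul_axisEllipsoid ha _

theorem statement4_general {S : Set (EuclideanSpace ℝ ι)} (hS : Bornology.IsBounded S)
    (ha : ∀ i, 0 < a i) (hES : axisEllipsoid a ⊆ S) {s : ℝ} (hs : 0 ≤ s)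
    (Q : AffineSubspace ℝ (EuclideanSpace ℝ ι)) {p : EuclideanSpace ℝ ι} (hp : p ∈ Q)
    (L : Submodule ℝ (EuclideanSpace ℝ ι))
    (hbig : 2 * s ^ ((1 : ℝ) / 2) * infDist 0 (Q : Set (EuclideanSpace ℝ ι)) ≤
      diam ((L : Set (EuclideanSpace ℝ ι)) ∩ axisBox fun i ↦ Fintype.card ι * a i)) :
    infDist ((1 - s) • p) (Q : Set (EuclideanSpace ℝ ι)) ≤
      ((Fintype.card ι : ℝ) ^ ((3 : ℝ) / 2) / 2) * s ^ ((1 : ℝ) / 2) *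
        diam ((L : Set (EuclideanSpace ℝ ι)) ∩ S) := by
  set k : ℝ := (Fintype.card ι : ℝ) ^ ((3 : ℝ) / 2)
  have hy : (1 - s) • p = AffineMap.homothety p s 0 := by
    simp only [AffineMap.homothety_apply, vsub_eq_sub, vadd_eq_add]
    module
  have hdiam : diam ((L : Set (EuclideanSpace ℝ ι)) ∩ axisBox fun i ↦ Fintype.card ι * a i) ≤
      k * diam ((L : Set (EuclideanSpace ℝ ι)) ∩ S) := by
    rw [← Real.norm_of_nonneg (show 0 ≤ k by positivity)]
    exact diam_submodule_inter_le_of_subset_smul L hS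
      ((axisBox_card_subset_smul_axisEllipsoid ha).trans (smul_set_mono hES))
  have hsqrt : s ^ ((1 : ℝ) / 2) * s ^ ((1 : ℝ) / 2) = s := by
    rw [← Real.sqrt_eq_rpow, Real.mul_self_sqrt hs]
  calc infDist ((1 - s) • p) (Q : Set (EuclideanSpace ℝ ι))
      = s * infDist 0 (Q : Set (EuclideanSpace ℝ ι)) := by
        rw [hy, infDist_homothety Q hp, Real.norm_of_nonneg hs]
    _ = s ^ ((1 : ℝ) / 2) / 2 *
          (2 * s ^ ((1 : ℝ) / 2) * infDist 0 (Q : Set (EuclideanSpace ℝ ι))) := by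
        linear_combination -infDist 0 (Q : Set (EuclideanSpace ℝ ι)) * hsqrt
    _ ≤ s ^ ((1 : ℝ) / 2) / 2 * (k * diam ((L : Set (EuclideanSpace ℝ ι)) ∩ S)) :=
        mul_le_mul_of_nonneg_left (hbig.trans hdiam) (by positivity)
    _ = k / 2 * s ^ ((1 : ℝ) / 2) * diam ((L : Set (EuclideanSpace ℝ ι)) ∩ S) := by ring

end Ellipsoid

/-- Let `S ⊂ ℝⁿ` be a well-centered convex body with inner John
ellipsoid `E = {x | ∑ i, (xⁱ/aⁱ)² ≤ 1}` (`aⁱ > 0`, `E ⊆ S ⊆ n • E`), and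
`R_n = {x | ∀ i, |xⁱ| ≤ n aⁱ}`.  Let `0 ≤ s ≤ 1`, `p ∈ ∂S`, `y = (1-s) • p`,
and let `P = {x | ⟪x, v⟫ = c}` be a hyperplane supporting `S` at `p`.  If
`diam (P^⊥ ∩ R_n) ≥ 2 s^(1/2) dist(0, P)`, then
`dist(y, P) ≤ (n^(3/2)/2) · s^(1/2) · diam (P^⊥ ∩ S)`, where `P^⊥` is the span
of `v`. -/
theorem statement4 (n : ℕ) (hn : 1 ≤ n)
    (S : Set (EuclideanSpace ℝ (Fin n)))
    (hScomp : IsCompact S) (hSconv : Convex ℝ S) (hSint : (interior S).Nonempty)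
    (a : Fin n → ℝ) (ha : ∀ i, 0 < a i)
    (E : Set (EuclideanSpace ℝ (Fin n)))
    (hE : E = {x | ∑ i, (x i / a i) ^ 2 ≤ 1})
    (hES : E ⊆ S) (hSE : S ⊆ (n : ℝ) • E)
    (R : Set (EuclideanSpace ℝ (Fin n)))
    (hR : R = {x | ∀ i, |x i| ≤ n * a i})
    (s : ℝ) (hs0 : 0 ≤ s) (hs1 : s ≤ 1)
    (p : EuclideanSpace ℝ (Fin n)) (hp : p ∈ frontier S)
    (y : EuclideanSpace ℝ (Fin n)) (hy : y = (1 - s) • p)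
    (v : EuclideanSpace ℝ (Fin n)) (hv : v ≠ 0) (c : ℝ)
    (hpP : ⟪p, v⟫ = c) (hpS : p ∈ S)
    (hsupp : ∀ x ∈ S, ⟪x, v⟫ ≤ c)
    (hbig : 2 * s ^ ((1 : ℝ) / 2) * infDist 0 {x : EuclideanSpace ℝ (Fin n) | ⟪x, v⟫ = c} ≤
      diam ((Submodule.span ℝ {v} : Set (EuclideanSpace ℝ (Fin n))) ∩ R)) :
    infDist y {x : EuclideanSpace ℝ (Fin n) | ⟪x, v⟫ = c} ≤
      ((n : ℝ) ^ ((3 : ℝ) / 2) / 2) * s ^ ((1 : ℝ) / 2) *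
        diam ((Submodule.span ℝ {v} : Set (EuclideanSpace ℝ (Fin n))) ∩ S) := by
  subst hE hR hy hpP
  simpa only [Fintype.card_fin, coe_mk'_orthogonal_span_singleton] using!
    statement4_general hScomp.isBounded ha hES hs0 (.mk' p (Submodule.span ℝ {v})ᗮ)
      (AffineSubspace.self_mem_mk' p _) (Submodule.span ℝ {v})
      (by simpa only [Fintype.card_fin, coe_mk'_orthogonal_span_singleton] using! hbig)
end

section
/- Let S ⊂ ℝⁿ be a well-centered convex body with inner John ellipsoid E, coordinates along the principal axes of E with semi-axis lengths a¹,…,aⁿ > 0. Fix 0 ≤ s ≤ s₀ < 1, set c₀ = (1 + s₀^(1/2^n))/(1 − s₀^(1/2^n)), and for 2 ≤ k ≤ n let π_k : ℝⁿ → ℝᵏ be the projection onto the first k coordinates and R_k = {x ∈ ℝᵏ : |xⁱ| ≤ c₀^(n−k) n aⁱ for i = 1,…,k}. Suppose y ∈ S, P_k ⊂ ℝᵏ is a hyperplane with 0 ∉ P_k such that: (i) the cylinder π_k⁻¹(P_k) does not meet the interior of S; (ii) dist(π_k(y), P_k) ≤ (2(n−k)+1) s^(1/2^(n−k)) dist(0,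 P_k); and (iii) diam(P_k^⊥ ∩ R_k) ≥ 2 s^(1/2^(n−k+1)) dist(0, P_k), where P_k^⊥ is the line through the origin of ℝᵏ orthogonal to P_k. Then there exists a hyperplane P ⊂ ℝⁿ supporting S such that dist(y, P) ≤ n^(3/2) c₀^(n−k) (n − k + 1/2) s^(1/2^(n−k+1)) diam(P^⊥ ∩ S). -/
open Metric Set
open scoped RealInnerProductSpace Pointwise

/-!
The supporting hyperplane is parallel to the cylinder `π⁻¹(P_k)`: its normal is the normal of `P_k`
padded with zeros. The cylinder misses the interior of `S`, so `S` lies on one side of it, and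
moving it towards `S` until it touches only brings it closer to `y`; thus
`dist(y, P) ≤ dist(π y, P_k)`. Since `s^(1/2^(n-k))` is the square of `s^(1/2^(n-k+1))`, (ii) and
(iii) bound `dist(π y, P_k)` by `(n - k + 1/2) s^(1/2^(n-k+1)) diam (P_k^⊥ ∩ R_k)`. Finally, a box
in `ℝᵏ` with half-sides `r aⁱ` lies in `r √k E`, so `P_k^⊥ ∩ R_k` is at most
`c₀^(n-k) n √k ≤ n^(3/2) c₀^(n-k)` times as long as `P^⊥ ∩ S`.
-/

section Hyperplane

variable {F G : Type*} [NormedAddCommGroup F] [InnerProductSpace ℝ F]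
  [NormedAddCommGroup G] [InnerProductSpace ℝ G]

/-- The hyperplane with normal vector `v` and offset `c`, as a set of points; it is a genuine
hyperplane only if `v ≠ 0`. -/
def hyperplane (v : F) (c : ℝ) : Set F := {x | ⟪x, v⟫ = c}

lemma mem_hyperplane {v x : F} {c : ℝ} : x ∈ hyperplane v c ↔ ⟪x, v⟫ = c := Iff.rfl

lemma hyperplane_neg (v : F) (c : ℝ) : hyperplane (-v) (-c) = hyperplane v c := by
  ext x
  simp only [mem_hyperplane, inner_neg_right, neg_inj]

lemma infDist_hyperplane (p : F) {v : F} (hv : v ≠ 0) (c : ℝ) :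
    infDist p (hyperplane v c) = |⟪p, v⟫ - c| / ‖v‖ := by
  have hv_norm : 0 < ‖v‖ := norm_pos_iff.mpr hv
  set foot : F := p - ((⟪p, v⟫ - c) / ‖v‖ ^ 2) • v with hfoot
  have hfoot_mem : foot ∈ hyperplane v c := by
    rw [mem_hyperplane, hfoot, inner_sub_left, real_inner_smul_left, real_inner_self_eq_norm_sq,
      div_mul_cancel₀ _ (by positivity), sub_sub_cancel]
  apply le_antisymm
  · calc infDist p (hyperplane v c) ≤ dist p foot := infDist_le_dist_of_mem hfoot_mem
      _ = |⟪p, v⟫ - c| / ‖v‖ := by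
        rw [dist_eq_norm, hfoot, sub_sub_cancel, norm_smul, Real.norm_eq_abs, abs_div, abs_sq]
        field_simp
  · rw [le_infDist ⟨foot, hfoot_mem⟩]
    intro x hx
    rw [div_le_iff₀ hv_norm, dist_eq_norm, ← mem_hyperplane.mp hx, ← inner_sub_left]
    exact abs_real_inner_le_norm _ _

lemma infDist_hyperplane_map (J : F →ₗᵢ[ℝ] G) {v : F} (hv : v ≠ 0) (c : ℝ) {p : F} {q : G}
    (hpq : ⟪q, J v⟫ = ⟪p, v⟫) :
    infDist q (hyperplane (J v) c) = infDist p (hyperplane v c) := by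
  rw [infDist_hyperplane q ((map_ne_zero_iff J J.injective).mpr hv), infDist_hyperplane p hv,
    J.norm_map, hpq]

lemma exists_supporting_hyperplane_infDist_le_of_inner_le {S : Set F} (hS : IsCompact S) {y : F}
    (hy : y ∈ S) {w : F} (hw : w ≠ 0) {c : ℝ} (hc : ∀ x ∈ S, ⟪x, w⟫ ≤ c) :
    ∃ d : ℝ, (hyperplane w d ∩ S).Nonempty ∧ (∀ x ∈ S, ⟪x, w⟫ ≤ d) ∧
      infDist y (hyperplane w d) ≤ infDist y (hyperplane w c) := by
  obtain ⟨z, hz, hmax⟩ := hS.exists_isMaxOn (f := fun x => ⟪x, w⟫) ⟨y, hy⟩ (by fun_prop)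
  refine ⟨⟪z, w⟫, ⟨z, rfl, hz⟩, fun x hx => hmax hx, ?_⟩
  have hyz : ⟪y, w⟫ ≤ ⟪z, w⟫ := hmax hy
  have hzc : ⟪z, w⟫ ≤ c := hc z hz
  rw [infDist_hyperplane y hw, infDist_hyperplane y hw, abs_of_nonpos (sub_nonpos.mpr hyz),
    abs_of_nonpos (sub_nonpos.mpr (hyz.trans hzc))]
  gcongr

lemma le_or_ge_of_ne_on_interior {V : Type*} [AddCommGroup V] [Module ℝ V] [TopologicalSpace V]
    [IsTopologicalAddGroup V] [ContinuousSMul ℝ V] {S : Set V} (hS : Convex ℝ S)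
    (hint : (interior S).Nonempty) {f : V → ℝ} (hf : Continuous f) {c : ℝ}
    (hfc : ∀ x ∈ interior S, f x ≠ c) : (∀ x ∈ S, f x ≤ c) ∨ ∀ x ∈ S, c ≤ f x := by
  have hclosure : S ⊆ closure (interior S) := by
    rw [hS.closure_interior_eq_closure_of_nonempty_interior hint]
    exact subset_closure
  have hsides : interior S ⊆ {x | f x < c} ∨ interior S ⊆ {x | c < f x} :=
    hS.interior.isPreconnected.subset_or_subset (isOpen_lt hf continuous_const)
      (isOpen_lt continuous_const hf)
      (disjoint_left.mpr fun _ hlt hgt => lt_asymm (mem_ofPred.mp hlt) (mem_ofPred.mp hgt))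
      fun x hx => lt_or_gt_of_ne (hfc x hx)
  refine hsides.imp (fun hlt x hx => ?_) fun hgt x hx => ?_
  · exact closure_minimal (fun z hz => (mem_ofPred.mp (hlt hz)).le)
      (isClosed_le hf continuous_const) (hclosure hx)
  · exact closure_minimal (fun z hz => (mem_ofPred.mp (hgt hz)).le)
      (isClosed_le continuous_const hf) (hclosure hx)

lemma exists_supporting_hyperplane_parallel_infDist_le {S : Set F} (hScomp : IsCompact S)
    (hSconv : Convex ℝ S) (hSint : (interior S).Nonempty) {y : F} (hy : y ∈ S) {w : F}
    (hw : w ≠ 0) {c : ℝ} (hmiss : ∀ x ∈ interior S, x ∉ hyperplane w c) :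
    ∃ (w' : F) (d : ℝ), w' ≠ 0 ∧ Submodule.span ℝ {w'} = Submodule.span ℝ {w} ∧
      (hyperplane w' d ∩ S).Nonempty ∧ (∀ x ∈ S, ⟪x, w'⟫ ≤ d) ∧
      infDist y (hyperplane w' d) ≤ infDist y (hyperplane w c) := by
  rcases le_or_ge_of_ne_on_interior hSconv hSint (f := fun x => ⟪x, w⟫) (by fun_prop) hmiss
    with hle | hge
  · obtain ⟨d, hd⟩ := exists_supporting_hyperplane_infDist_le_of_inner_le hScomp hy hw hle
    exact ⟨w, d, hw, rfl, hd⟩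
  · have hle : ∀ x ∈ S, ⟪x, -w⟫ ≤ -c := fun x hx => by
      simpa only [inner_neg_right, neg_le_neg_iff] using hge x hx
    obtain ⟨d, hd⟩ :=
      exists_supporting_hyperplane_infDist_le_of_inner_le hScomp hy (neg_ne_zero.mpr hw) hle
    rw [hyperplane_neg] at hd
    exact ⟨-w, d, neg_ne_zero.mpr hw, by rw [← Set.neg_singleton, Submodule.span_neg], hd⟩

lemma diam_span_inter_le_of_map_mem_smul (J : F →ₗᵢ[ℝ] G) {K : Set F} {S : Set G}
    (hS : Bornology.IsBounded S) {C : ℝ} (hC : 0 < C) (hKS : ∀ x ∈ K, J x ∈ C • S) (v : F) :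
    diam ((Submodule.span ℝ {v} : Set F) ∩ K) ≤
      C * diam ((Submodule.span ℝ {J v} : Set G) ∩ S) := by
  have hsub : J '' ((Submodule.span ℝ {v} : Set F) ∩ K) ⊆
      C • ((Submodule.span ℝ {J v} : Set G) ∩ S) := by
    rintro _ ⟨x, ⟨hxv, hxK⟩, rfl⟩
    obtain ⟨u, huS, hu⟩ := hKS x hxK
    refine ⟨u, ⟨?_, huS⟩, hu⟩
    obtain ⟨t, rfl⟩ := Submodule.mem_span_singleton.mp hxv
    refine Submodule.mem_span_singleton.mpr ⟨C⁻¹ * t, ?_⟩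
    rw [mul_smul, ← J.map_smul, inv_smul_eq_iff₀ hC.ne']
    exact hu.symm
  calc diam ((Submodule.span ℝ {v} : Set F) ∩ K)
      = diam (J '' ((Submodule.span ℝ {v} : Set F) ∩ K)) := (J.diam_image _).symm
    _ ≤ diam (C • ((Submodule.span ℝ {J v} : Set G) ∩ S)) :=
        diam_mono hsub ((hS.subset inter_subset_right).smul₀ C)
    _ = C * diam ((Submodule.span ℝ {J v} : Set G) ∩ S) := by
        rw [diam_smul₀, Real.norm_of_nonneg hC.le]

end Hyperplane

section Coordinates

variable {ι κ : Type*} [Fintype ι] [Fintype κ]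

/-- The closed ellipsoid centered at `0` with semi-axes `a i > 0` along the coordinate axes. If
`a i = 0`, division by zero makes it a cylinder in the direction `i` instead. -/
def ellipsoid (a : ι → ℝ) : Set (EuclideanSpace ℝ ι) := {x | ∑ i, (x i / a i) ^ 2 ≤ 1}

/-- The closed coordinate box centered at `0` with half-sides `b i`. -/
def box (b : ι → ℝ) : Set (EuclideanSpace ℝ ι) := {x | ∀ i, |x i| ≤ b i}

lemma mem_smul_ellipsoid {a : ι → ℝ} {C : ℝ} (hC : C ≠ 0) {x : EuclideanSpace ℝ ι} :
    x ∈ C • ellipsoid a ↔ ∑ i, (x i / a i) ^ 2 ≤ C ^ 2 := by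
  have hscale : ∑ i, ((C⁻¹ • x) i / a i) ^ 2 = (∑ i, (x i / a i) ^ 2) / C ^ 2 := by
    rw [Finset.sum_div]
    refine Finset.sum_congr rfl fun i _ => ?_
    rw [PiLp.smul_apply, smul_eq_mul, mul_div_assoc, mul_pow, inv_pow, inv_mul_eq_div]
  rw [mem_smul_set_iff_inv_smul_mem₀ hC, ellipsoid, mem_ofPred, hscale,
    div_le_one (by positivity)]

lemma zero_mem_interior_ellipsoid (a : ι → ℝ) : 0 ∈ interior (ellipsoid a) := by
  have hcont : Continuous fun x : EuclideanSpace ℝ ι => ∑ i, (x i / a i) ^ 2 := by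
    simp only [div_eq_mul_inv]
    fun_prop
  refine mem_interior.mpr ⟨{x | ∑ i, (x i / a i) ^ 2 < 1}, fun x hx => (mem_ofPred.mp hx).le,
    isOpen_lt hcont continuous_const, by simp⟩

lemma sum_extend_zero {e : κ → ι} (he : Function.Injective e) (v : κ → ℝ) {f : ι → ℝ → ℝ}
    (hf : ∀ i, f i 0 = 0) :
    ∑ i, f i (Function.extend e v 0 i) = ∑ j, f (e j) (v j) := by
  refine (Fintype.sum_of_injective e he _ _ (fun i hi => ?_) fun j => ?_).symm
  · rw [Function.extend_apply' _ _ _ (by simpa using hi), Pi.zero_apply, hf]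
  · rw [he.extend_apply]

/-- The isometric embedding of `ℝ^κ` into `ℝ^ι` that places the coordinate `j` at `e j` and fills
the remaining coordinates with zeros. -/
noncomputable def extendByZero (e : κ ↪ ι) : EuclideanSpace ℝ κ →ₗᵢ[ℝ] EuclideanSpace ℝ ι where
  toLinearMap := (WithLp.linearEquiv 2 ℝ (ι → ℝ)).symm.toLinearMap ∘ₗ
    Function.ExtendByZero.linearMap ℝ e ∘ₗ (WithLp.linearEquiv 2 ℝ (κ → ℝ)).toLinearMap
  norm_map' x := by
    rw [EuclideanSpace.norm_eq, EuclideanSpace.norm_eq]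
    exact congrArg Real.sqrt
      (sum_extend_zero e.injective x (f := fun _ t => ‖t‖ ^ 2) fun _ => by simp)

lemma extendByZero_apply (e : κ ↪ ι) (x : EuclideanSpace ℝ κ) (i : ι) :
    extendByZero e x i = Function.extend e x 0 i := rfl

lemma inner_extendByZero (e : κ ↪ ι) {x : EuclideanSpace ℝ ι} {x' : EuclideanSpace ℝ κ}
    (hx : ∀ j, x' j = x (e j)) (v : EuclideanSpace ℝ κ) : ⟪x, extendByZero e v⟫ = ⟪x', v⟫ := by
  simp only [PiLp.inner_apply, extendByZero_apply, hx]
  exact sum_extend_zero e.injective v (f := fun i t => ⟪x i, t⟫) fun _ => inner_zero_right _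

lemma extendByZero_mem_smul_ellipsoid [Nonempty κ] (e : κ ↪ ι) {a : ι → ℝ} (ha : ∀ i, 0 ≤ a i)
    {r : ℝ} (hr : 0 < r) {x : EuclideanSpace ℝ κ} (hx : x ∈ box fun j => r * a (e j)) :
    extendByZero e x ∈ (r * √(Fintype.card κ)) • ellipsoid a := by
  have hcoord (j : κ) : (x j / a (e j)) ^ 2 ≤ r ^ 2 := by
    rw [sq_le_sq, abs_div, abs_of_nonneg (ha _), abs_of_pos hr]
    exact div_le_of_le_mul₀ (ha _) hr.le (hx j)
  rw [mem_smul_ellipsoid (by positivity)]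
  calc ∑ i, (extendByZero e x i / a i) ^ 2 = ∑ j, (x j / a (e j)) ^ 2 :=
        sum_extend_zero e.injective x (f := fun i t => (t / a i) ^ 2) fun _ => by simp
    _ ≤ ∑ _j : κ, r ^ 2 := Finset.sum_le_sum fun j _ => hcoord j
    _ = (r * √(Fintype.card κ)) ^ 2 := by
        rw [mul_pow, Real.sq_sqrt (Nat.cast_nonneg _), Finset.sum_const, Finset.card_univ,
          nsmul_eq_mul, mul_comm]

lemma diam_span_inter_box_le [Nonempty κ] (e : κ ↪ ι) {S : Set (EuclideanSpace ℝ ι)}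
    (hS : Bornology.IsBounded S) {a : ι → ℝ} (ha : ∀ i, 0 ≤ a i) (hES : ellipsoid a ⊆ S) {r : ℝ}
    (hr : 0 < r) (v : EuclideanSpace ℝ κ) :
    diam ((Submodule.span ℝ {v} : Set (EuclideanSpace ℝ κ)) ∩ box fun j => r * a (e j)) ≤
      r * √(Fintype.card κ) *
        diam ((Submodule.span ℝ {extendByZero e v} : Set (EuclideanSpace ℝ ι)) ∩ S) :=
  diam_span_inter_le_of_map_mem_smul (extendByZero e) hS (by positivity)
    (fun _ hx => smul_set_mono hES (extendByZero_mem_smul_ellipsoid e ha hr hx)) v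

lemma exists_supporting_hyperplane_of_cylinder [Nonempty κ] (e : κ ↪ ι)
    {S : Set (EuclideanSpace ℝ ι)} (hScomp : IsCompact S) (hSconv : Convex ℝ S) {a : ι → ℝ}
    (ha : ∀ i, 0 ≤ a i) (hES : ellipsoid a ⊆ S) {r : ℝ} (hr : 0 < r)
    {π : EuclideanSpace ℝ ι → EuclideanSpace ℝ κ} (hπ : ∀ x j, π x j = x (e j))
    {y : EuclideanSpace ℝ ι} (hy : y ∈ S) {v : EuclideanSpace ℝ κ} (hv : v ≠ 0) {c : ℝ}
    (hcyl : ∀ x ∈ interior S, π x ∉ hyperplane v c) :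
    ∃ (w : EuclideanSpace ℝ ι) (d : ℝ), w ≠ 0 ∧
      (hyperplane w d ∩ S).Nonempty ∧ (∀ x ∈ S, ⟪x, w⟫ ≤ d) ∧
      infDist y (hyperplane w d) ≤ infDist (π y) (hyperplane v c) ∧
      diam ((Submodule.span ℝ {v} : Set (EuclideanSpace ℝ κ)) ∩ box fun j => r * a (e j)) ≤
        r * √(Fintype.card κ) *
          diam ((Submodule.span ℝ {w} : Set (EuclideanSpace ℝ ι)) ∩ S) := by
  have hinner (x) : ⟪x, extendByZero e v⟫ = ⟪π x, v⟫ := inner_extendByZero e (hπ x) v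
  have hpad : extendByZero e v ≠ 0 :=
    (map_ne_zero_iff (extendByZero e) (extendByZero e).injective).mpr hv
  have hint : (interior S).Nonempty := ⟨0, interior_mono hES (zero_mem_interior_ellipsoid a)⟩
  have hmiss : ∀ x ∈ interior S, x ∉ hyperplane (extendByZero e v) c := fun x hx => by
    simpa only [mem_hyperplane, hinner] using hcyl x hx
  obtain ⟨w, d, hw, hspan, hmeet, hside, hdist⟩ :=
    exists_supporting_hyperplane_parallel_infDist_le hScomp hSconv hint hy hpad hmiss
  refine ⟨w, d, hw, hmeet, hside, ?_, ?_⟩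
  · rwa [infDist_hyperplane_map (extendByZero e) hv c (hinner y)] at hdist
  · rw [hspan]
    exact diam_span_inter_box_le e hScomp.isBounded ha hES hr v

end Coordinates

lemma rpow_one_div_two_pow_eq_sq {s : ℝ} (hs : 0 ≤ s) (m : ℕ) :
    s ^ ((1 : ℝ) / 2 ^ m) = (s ^ ((1 : ℝ) / 2 ^ (m + 1))) ^ 2 := by
  rw [← Real.rpow_mul_natCast hs]
  congr 1
  rw [pow_succ]
  field_simp
  norm_num

lemma rpow_three_div_two {x : ℝ} (hx : 0 ≤ x) : x ^ ((3 : ℝ) / 2) = x * √x := by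
  rw [Real.sqrt_eq_rpow, ← Real.rpow_one_add' hx (by norm_num)]
  norm_num

lemma one_add_rpow_div_one_sub_rpow_pos {x p : ℝ} (hx₀ : 0 ≤ x) (hx₁ : x < 1) (hp : 0 < p) :
    0 < (1 + x ^ p) / (1 - x ^ p) :=
  div_pos (by positivity) (sub_pos.mpr (Real.rpow_lt_one hx₀ hx₁ hp))

theorem statement5_general (n k : ℕ) (hkn : k ≤ n)
    (S : Set (EuclideanSpace ℝ (Fin n))) (hScomp : IsCompact S) (hSconv : Convex ℝ S)
    (a : Fin n → ℝ) (ha : ∀ i, 0 < a i) (hES : ellipsoid a ⊆ S)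
    (s : ℝ) (hs : 0 ≤ s) (c₀ : ℝ) (hc₀ : 0 < c₀)
    (π : EuclideanSpace ℝ (Fin n) → EuclideanSpace ℝ (Fin k))
    (hπ : ∀ x (i : Fin k), π x i = x (Fin.castLE hkn i))
    (y : EuclideanSpace ℝ (Fin n)) (hy : y ∈ S)
    (v : EuclideanSpace ℝ (Fin k)) (hv : v ≠ 0) (c : ℝ)
    (hcyl : ∀ x ∈ interior S, π x ∉ hyperplane v c)
    (hii : infDist (π y) (hyperplane v c) ≤
      (2 * ((n : ℝ) - k) + 1) * s ^ ((1 : ℝ) / 2 ^ (n - k)) * infDist 0 (hyperplane v c))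
    (hiii : 2 * s ^ ((1 : ℝ) / 2 ^ (n - k + 1)) * infDist 0 (hyperplane v c) ≤
      diam ((Submodule.span ℝ {v} : Set (EuclideanSpace ℝ (Fin k))) ∩
        box fun i => c₀ ^ (n - k) * n * a (Fin.castLE hkn i))) :
    ∃ (w : EuclideanSpace ℝ (Fin n)) (d : ℝ), w ≠ 0 ∧
      (hyperplane w d ∩ S).Nonempty ∧
      (∀ x ∈ S, ⟪x, w⟫ ≤ d) ∧
      infDist y (hyperplane w d) ≤
        (n : ℝ) ^ ((3 : ℝ) / 2) * c₀ ^ (n - k) * ((n : ℝ) - k + 1 / 2) *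
          s ^ ((1 : ℝ) / 2 ^ (n - k + 1)) *
          diam ((Submodule.span ℝ {w} : Set (EuclideanSpace ℝ (Fin n))) ∩ S) := by
  have : Nonempty (Fin k) := not_isEmpty_iff.mp fun _ => hv (Subsingleton.elim _ _)
  have hn : 0 < n := (Fin.pos_iff_nonempty.mpr this).trans_le hkn
  have hkn' : (k : ℝ) ≤ n := Nat.cast_le.mpr hkn
  obtain ⟨w, d, hw, hmeet, hside, hdist, hdiam⟩ :=
    exists_supporting_hyperplane_of_cylinder (Fin.castLEEmb hkn) hScomp hSconv
      (fun i => (ha i).le) hES (by positivity : 0 < c₀ ^ (n - k) * n) hπ hy hv hcyl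
  refine ⟨w, d, hw, hmeet, hside, ?_⟩
  rw [Fintype.card_fin] at hdiam
  rw [rpow_one_div_two_pow_eq_sq hs] at hii
  set t := s ^ ((1 : ℝ) / 2 ^ (n - k + 1))
  set D := diam ((Submodule.span ℝ {w} : Set (EuclideanSpace ℝ (Fin n))) ∩ S)
  have hfactor : 0 ≤ ((n : ℝ) - k + 1 / 2) * t :=
    mul_nonneg (by linarith) (Real.rpow_nonneg hs _)
  calc infDist y (hyperplane w d) ≤ infDist (π y) (hyperplane v c) := hdist
    _ ≤ (2 * ((n : ℝ) - k) + 1) * t ^ 2 * infDist 0 (hyperplane v c) := hii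
    _ = ((n : ℝ) - k + 1 / 2) * t * (2 * t * infDist 0 (hyperplane v c)) := by ring
    _ ≤ ((n : ℝ) - k + 1 / 2) * t * (c₀ ^ (n - k) * n * √k * D) :=
        mul_le_mul_of_nonneg_left (hiii.trans hdiam) hfactor
    _ ≤ ((n : ℝ) - k + 1 / 2) * t * (c₀ ^ (n - k) * n * √n * D) := by gcongr
    _ = (n : ℝ) ^ ((3 : ℝ) / 2) * c₀ ^ (n - k) * ((n : ℝ) - k + 1 / 2) * t * D := by
        rw [rpow_three_div_two n.cast_nonneg]
        ring

/-- Let `S ⊂ ℝⁿ` be a well-centered convex body with inner John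
ellipsoid `E = {x | ∑ i, (xⁱ/aⁱ)² ≤ 1}` (`aⁱ > 0`, `E ⊆ S ⊆ n • E`).  Fix
`0 ≤ s ≤ s₀ < 1`, set `c₀ = (1 + s₀^(1/2^n))/(1 - s₀^(1/2^n))`, and for
`2 ≤ k ≤ n` let `π_k : ℝⁿ → ℝᵏ` be the projection onto the first `k`
coordinates and `R_k = {x ∈ ℝᵏ | ∀ i ≤ k, |xⁱ| ≤ c₀^(n-k) n aⁱ}`.  Suppose
`y ∈ S` and `P_k = {x' ∈ ℝᵏ | ⟪x', v⟫ = c}` (`v ≠ 0`) is a hyperplane with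
`0 ∉ P_k` such that (i) `π_k⁻¹(P_k)` does not meet the interior of `S`,
(ii) `dist(π_k y, P_k) ≤ (2(n-k)+1) s^(1/2^(n-k)) dist(0, P_k)`, and
(iii) `diam (P_k^⊥ ∩ R_k) ≥ 2 s^(1/2^(n-k+1)) dist(0, P_k)`.  Then some
hyperplane `P` supporting `S` satisfies
`dist(y, P) ≤ n^(3/2) c₀^(n-k) (n-k+1/2) s^(1/2^(n-k+1)) diam (P^⊥ ∩ S)`. -/
theorem statement5 (n k : ℕ) (hk2 : 2 ≤ k) (hkn : k ≤ n)
    (S : Set (EuclideanSpace ℝ (Fin n)))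
    (hScomp : IsCompact S) (hSconv : Convex ℝ S) (hSint : (interior S).Nonempty)
    (a : Fin n → ℝ) (ha : ∀ i, 0 < a i)
    (E : Set (EuclideanSpace ℝ (Fin n)))
    (hE : E = {x | ∑ i, (x i / a i) ^ 2 ≤ 1})
    (hES : E ⊆ S) (hSE : S ⊆ (n : ℝ) • E)
    (s s₀ : ℝ) (hs : 0 ≤ s) (hss₀ : s ≤ s₀) (hs₀ : s₀ < 1)
    (c₀ : ℝ) (hc₀ : c₀ = (1 + s₀ ^ ((1 : ℝ) / 2 ^ n)) / (1 - s₀ ^ ((1 : ℝ) / 2 ^ n)))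
    (π : EuclideanSpace ℝ (Fin n) → EuclideanSpace ℝ (Fin k))
    (hπ : ∀ x (i : Fin k), π x i = x (Fin.castLE hkn i))
    (Rk : Set (EuclideanSpace ℝ (Fin k)))
    (hRk : Rk = {x | ∀ i : Fin k, |x i| ≤ c₀ ^ (n - k) * n * a (Fin.castLE hkn i)})
    (y : EuclideanSpace ℝ (Fin n)) (hy : y ∈ S)
    (v : EuclideanSpace ℝ (Fin k)) (hv : v ≠ 0) (c : ℝ)
    (h0P : (0 : EuclideanSpace ℝ (Fin k)) ∉ {x' : EuclideanSpace ℝ (Fin k) | ⟪x', v⟫ = c})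
    (hcyl : ∀ x ∈ interior S, π x ∉ {x' : EuclideanSpace ℝ (Fin k) | ⟪x', v⟫ = c})
    (hii : infDist (π y) {x' : EuclideanSpace ℝ (Fin k) | ⟪x', v⟫ = c} ≤
      (2 * ((n : ℝ) - k) + 1) * s ^ ((1 : ℝ) / 2 ^ (n - k)) *
        infDist 0 {x' : EuclideanSpace ℝ (Fin k) | ⟪x', v⟫ = c})
    (hiii : 2 * s ^ ((1 : ℝ) / 2 ^ (n - k + 1)) *
        infDist 0 {x' : EuclideanSpace ℝ (Fin k) | ⟪x', v⟫ = c} ≤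
      diam ((Submodule.span ℝ {v} : Set (EuclideanSpace ℝ (Fin k))) ∩ Rk)) :
    ∃ (w : EuclideanSpace ℝ (Fin n)) (d : ℝ), w ≠ 0 ∧
      ({x | ⟪x, w⟫ = d} ∩ S).Nonempty ∧
      (∀ x ∈ S, ⟪x, w⟫ ≤ d) ∧
      infDist y {x | ⟪x, w⟫ = d} ≤
        (n : ℝ) ^ ((3 : ℝ) / 2) * c₀ ^ (n - k) * ((n : ℝ) - k + 1 / 2) *
          s ^ ((1 : ℝ) / 2 ^ (n - k + 1)) *
          diam ((Submodule.span ℝ {w} : Set (EuclideanSpace ℝ (Fin n))) ∩ S) := by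
  subst hE hRk
  exact statement5_general n k hkn S hScomp hSconv a ha hES s hs c₀
    (hc₀ ▸ one_add_rpow_div_one_sub_rpow_pos (hs.trans hss₀) hs₀ (by positivity))
    π hπ y hy v hv c hcyl hii hiii
end
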